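/- arXiv:2410.23270 — 2 statements merged into one kernel-verified Lean document; each statement's English description precedes it below -/
import Mathlib

section
/- Let M = (X, P, π) be a reversible finite Markov chain, H : X → ℝ with minimum E* < 0 and π(E*) < 1, η ∈ (0,1), γ ∈ (0,1], ω ∈ (0,1) and 0 ≤ b ≤ 1. Suppose the γ spectral density condition holds (π({x : H(x) ≤ (1−η)E*}) ≤ π(E*)^γ) and the ω/2 short-path condition holds at b (smallest eigenvalue of Π_⊥ H_b Π_⊥ at least −1 + ω/2). Then the smallest eigenvalue E_b of the short-path Hamiltonian H_b = −D(P) + b·G_η satisfies −1 − 4·π(E*)^γ/ω < E_b ≤ −1; in particular |E_b| < 1 + 4·π(E*)^γ/ω. -/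
open Matrix Finset

noncomputable section

variable {X : Type*} [Fintype X] [DecidableEq X]

/-- A finite Markov chain: a row-stochastic matrix `P` together with a fully supported
stationary distribution `π`. -/
structure IsMarkov (P : Matrix X X ℝ) (π : X → ℝ) : Prop where
  nonneg : ∀ x y, 0 ≤ P x y
  rowSum : ∀ x, ∑ y, P x y = 1
  pi_pos : ∀ x, 0 < π x
  pi_sum : ∑ x, π x = 1
  stationary : ∀ y, ∑ x, π x * P x y = π y

/-- Detailed balance / reversibility. -/
def IsReversible (P : Matrix X X ℝ) (π : X → ℝ) : Prop :=
  ∀ x y, π x * P x y = π y * P y x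

/-- The discriminant matrix `D(P)_{xy} = sqrt (π x / π y) * P x y`. -/
def discMat (P : Matrix X X ℝ) (π : X → ℝ) : Matrix X X ℝ :=
  Matrix.of fun x y => Real.sqrt (π x / π y) * P x y

/-- The vector with entries `sqrt (π x)`. -/
def sqrtVec (π : X → ℝ) : X → ℝ := fun x => Real.sqrt (π x)

/-- `g_η (x) = min 0 ((x + 1 - η)/η)`. -/
def gEta (η x : ℝ) : ℝ := min 0 ((x + 1 - η) / η)

/-- `f (x) = - g_η (-x)`. -/
def fEta (η x : ℝ) : ℝ := -gEta η (-x)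

/-- The diagonal matrix `G_η` with entries `g_η (H z / |E*|)`. -/
def GEtaMat (η : ℝ) (H : X → ℝ) (Estar : ℝ) : Matrix X X ℝ :=
  Matrix.diagonal fun z => gEta η (H z / |Estar|)

/-- The short-path Hamiltonian `H_b = -D(P) + b • G_η`. -/
def shortPathHam (P : Matrix X X ℝ) (π : X → ℝ) (b η : ℝ) (H : X → ℝ) (Estar : ℝ) :
    Matrix X X ℝ :=
  -discMat P π + b • GEtaMat η H Estar

/-- The projector `Π_⊥ = 1 - |√π⟩⟨√π|`. -/
def projPerp (π : X → ℝ) : Matrix X X ℝ :=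
  1 - Matrix.vecMulVec (sqrtVec π) (sqrtVec π)

/-- `π(E*)`: the stationary mass of the set of global minimisers of `H`. -/
def piStar (π H : X → ℝ) (Estar : ℝ) : ℝ :=
  ∑ x, Set.indicator {y | H y = Estar} π x

/-- The stationary mass of the sublevel set `{H ≤ t}`. -/
def massLE (π H : X → ℝ) (t : ℝ) : ℝ :=
  ∑ x, Set.indicator {y | H y ≤ t} π x

/-- The Dirichlet form `D(f,f) = ⟨f, (I - P) f⟩_π`. -/
def dirichletForm (P : Matrix X X ℝ) (π f : X → ℝ) : ℝ :=
  ∑ x, π x * (f x * (f x - P.mulVec f x))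

/-- `Ent_π (f) = E_π[f ln f] - E_π[f] ln (E_π[f])`. -/
def entPi (π f : X → ℝ) : ℝ :=
  (∑ x, π x * (f x * Real.log (f x))) - (∑ x, π x * f x) * Real.log (∑ x, π x * f x)

/-- `Var_π (f) = E_π[f²] - (E_π[f])²`. -/
def varPi (π f : X → ℝ) : ℝ :=
  (∑ x, π x * f x ^ 2) - (∑ x, π x * f x) ^ 2

/-- Log-Sobolev inequality with constant `ω`. -/
def LogSobolev (P : Matrix X X ℝ) (π : X → ℝ) (ω : ℝ) : Prop :=
  ∀ f : X → ℝ, ω * entPi π (fun x => f x ^ 2) ≤ dirichletForm P π f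

/-- Poincaré inequality with constant `δ`. -/
def Poincare (P : Matrix X X ℝ) (π : X → ℝ) (δ : ℝ) : Prop :=
  ∀ f : X → ℝ, δ * varPi π f ≤ dirichletForm P π f

/-- Kullback–Leibler divergence of finitely supported densities. -/
def klDiv (μ ν : X → ℝ) : ℝ := ∑ x, μ x * Real.log (μ x / ν x)

/-- Total variation distance of finitely supported densities. -/
def tvDist (μ ν : X → ℝ) : ℝ := (∑ x, |μ x - ν x|) / 2

/-- The `θ` short-path condition at `b`: the smallest eigenvalue of `Π_⊥ H_b Π_⊥` is
at least `-1 + θ`, expressed via the Rayleigh quotient. -/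
def ShortPathCond (P : Matrix X X ℝ) (π : X → ℝ) (b η : ℝ) (H : X → ℝ) (Estar θ : ℝ) :
    Prop :=
  ∀ v : X → ℝ,
    (-1 + θ) * (∑ x, v x * v x) ≤
      ∑ x, v x * (projPerp π * shortPathHam P π b η H Estar * projPerp π).mulVec v x

/-- `Δ`-stability of the cost function `H` under the chain `P`. -/
def DeltaStable (P : Matrix X X ℝ) (H : X → ℝ) (Estar η Δ : ℝ) : Prop :=
  ∀ x, ∑ y, P x y * gEta η (H y / |Estar|) ≤ gEta η ((H x + Δ) / |Estar|)

/-- The `α`-subdepolarizing property of the pair `(P, H)`. -/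
def Subdepolarizing (P : Matrix X X ℝ) (H : X → ℝ) (Estar η α : ℝ) : Prop :=
  ∀ (T : ℕ) (c : Fin T → ℝ), (∀ t, c t ∈ Set.Ioo (0:ℝ) 1) →
    ∀ x, (∏ t, fEta η (c t * (1 - α) * H x / Estar)) ≤
      ∑ y, P x y * ∏ t, fEta η (c t * H y / Estar)

/-- The `P`-pseudo-Lipschitz norm `‖H‖_P = max_x Σ_y P x y (H x - H y)²`. -/
def pseudoLipNorm [Nonempty X] (P : Matrix X X ℝ) (H : X → ℝ) : ℝ :=
  univ.sup' univ_nonempty fun x => ∑ y, P x y * (H x - H y) ^ 2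

/-!
Write `s` for the unit vector `√π` and `φ = b g_η(H/|E*|)`, a potential with values in `[-1, 0]`
that vanishes off the sublevel set `{H ≤ (1 - η) E*}`. Since `D(P) s = s`, the Hamiltonian maps `s`
to `-s + φ s`, so `s` is an eigenvector for `-1` up to an error controlled by the mass `m` of the
sublevel set: `0 ≤ -⟨s, φ s⟩ ≤ m` and `‖φ s‖² ≤ m`. The Rayleigh quotient at `s` gives `E_b ≤ -1`.
Conversely, if the quadratic form of `H_b` is at least `-1 + θ` on the complement of `s`,
completing the square in the cross term between `s` and its complement costs at most `‖φ s‖² / θ`,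
so that `E_b ≥ -1 - m - m / θ`.
-/

section QuadraticForm

open RCLike
open scoped InnerProductSpace

variable {𝕜 E : Type*} [RCLike 𝕜] [NormedAddCommGroup E] [InnerProductSpace 𝕜 E]

theorem re_inner_add_map_add {T : E →ₗ[𝕜] E} (hT : T.IsSymmetric) (u w : E) :
    re ⟪u + w, T (u + w)⟫_𝕜 = re ⟪u, T u⟫_𝕜 + 2 * re ⟪w, T u⟫_𝕜 + re ⟪w, T w⟫_𝕜 := by
  have hcross : re ⟪u, T w⟫_𝕜 = re ⟪w, T u⟫_𝕜 := by rw [← hT u w, inner_re_symm]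
  simp only [map_add, inner_add_left, inner_add_right, hcross]
  ring

theorem re_inner_smul_map_smul (T : E →ₗ[𝕜] E) (a : 𝕜) (s : E) :
    re ⟪a • s, T (a • s)⟫_𝕜 = ‖a‖ ^ 2 * re ⟪s, T s⟫_𝕜 := by
  rw [map_smul, inner_smul_left, inner_smul_right, ← mul_assoc, RCLike.conj_mul, ← ofReal_pow,
    re_ofReal_mul]

theorem mul_norm_sq_le_re_inner_map_of_gap {T : E →ₗ[𝕜] E} (hT : T.IsSymmetric) {s t : E}
    {μ θ : ℝ} (hs : ‖s‖ = 1) (hTs : T s = (μ : 𝕜) • s + t) (hst : re ⟪s, t⟫_𝕜 ≤ 0) (hθ : 0 < θ)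
    (hgap : ∀ w, ⟪s, w⟫_𝕜 = 0 → (μ + θ) * ‖w‖ ^ 2 ≤ re ⟪w, T w⟫_𝕜) (v : E) :
    (μ + re ⟪s, t⟫_𝕜 - ‖t‖ ^ 2 / θ) * ‖v‖ ^ 2 ≤ re ⟪v, T v⟫_𝕜 := by
  obtain ⟨a, w, hsw, rfl⟩ : ∃ (a : 𝕜) (w : E), ⟪s, w⟫_𝕜 = 0 ∧ v = a • s + w :=
    ⟨⟪s, v⟫_𝕜, v - ⟪s, v⟫_𝕜 • s, by
      simp [inner_sub_right, inner_smul_right, inner_self_eq_norm_sq_to_K, hs], by abel⟩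
  have hnorm : ‖a • s + w‖ ^ 2 = ‖a‖ ^ 2 + ‖w‖ ^ 2 := by
    have := norm_add_sq_eq_norm_sq_add_norm_sq_of_inner_eq_zero (𝕜 := 𝕜) (a • s) w
      (by rw [inner_smul_left, hsw, mul_zero])
    simpa only [← sq, norm_smul, hs, mul_one] using this
  have hdiag : re ⟪s, T s⟫_𝕜 = μ + re ⟪s, t⟫_𝕜 := by
    simp [hTs, inner_add_right, inner_smul_right, inner_self_eq_norm_sq_to_K, hs]
  have hcross : -(‖w‖ * (‖a‖ * ‖t‖)) ≤ re ⟪w, T (a • s)⟫_𝕜 := by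
    have hws : ⟪w, s⟫_𝕜 = 0 := inner_eq_zero_symm.1 hsw
    have : ⟪w, T (a • s)⟫_𝕜 = ⟪w, a • t⟫_𝕜 := by
      simp only [map_smul, hTs, smul_add, inner_add_right, inner_smul_right, hws, mul_zero,
        zero_add]
    rw [this, ← norm_smul]
    exact neg_le_of_abs_le ((abs_re_le_norm _).trans (norm_inner_le_norm _ _))
  have hsquare : 2 * (‖w‖ * (‖a‖ * ‖t‖)) ≤ θ * ‖w‖ ^ 2 + ‖t‖ ^ 2 / θ * ‖a‖ ^ 2 := by
    have : θ * ‖w‖ ^ 2 + ‖t‖ ^ 2 / θ * ‖a‖ ^ 2 - 2 * (‖w‖ * (‖a‖ * ‖t‖)) =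
        (θ * ‖w‖ - ‖a‖ * ‖t‖) ^ 2 / θ := by
      field_simp
      ring
    linarith [show 0 ≤ (θ * ‖w‖ - ‖a‖ * ‖t‖) ^ 2 / θ by positivity]
  have hrest : 0 ≤ (‖t‖ ^ 2 / θ - re ⟪s, t⟫_𝕜) * ‖w‖ ^ 2 :=
    mul_nonneg (sub_nonneg.2 (hst.trans (by positivity))) (sq_nonneg _)
  rw [hnorm, re_inner_add_map_add hT, re_inner_smul_map_smul, hdiag]
  linarith [hgap w hsw]

end QuadraticForm

section Eigenvalues

open RCLike
open scoped InnerProductSpace MatrixOrder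

variable {𝕜 ι : Type*} [RCLike 𝕜] [Fintype ι] [DecidableEq ι]

theorem le_iff_of_isLeast_eigenvalues {A : Matrix ι ι 𝕜} (hA : A.IsHermitian) {c E : ℝ}
    (hE : IsLeast (Set.range hA.eigenvalues) E) :
    c ≤ E ↔ ∀ v : EuclideanSpace 𝕜 ι, c * ‖v‖ ^ 2 ≤ re ⟪v, toEuclideanLin A v⟫_𝕜 := by
  have hsymm : (toEuclideanLin (A - algebraMap ℝ _ c)).IsSymmetric :=
    isSymmetric_toEuclideanLin_iff.2 (hA.sub (IsSelfAdjoint.algebraMap _ (.all c)))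
  have hform (v : EuclideanSpace 𝕜 ι) :
      re ⟪toEuclideanLin (A - algebraMap ℝ _ c) v, v⟫_𝕜 =
        re ⟪v, toEuclideanLin A v⟫_𝕜 - c * ‖v‖ ^ 2 := by
    have hscalar : toEuclideanLin (algebraMap ℝ (Matrix ι ι 𝕜) c) v = (c : 𝕜) • v := by
      rw [Algebra.algebraMap_eq_smul_one, real_smul_eq_coe_smul (K := 𝕜), map_smul, toLpLin_one]
      rfl
    rw [hsymm, map_sub, LinearMap.sub_apply, hscalar, inner_sub_right, inner_smul_right, map_sub,
      re_ofReal_mul, inner_self_eq_norm_sq]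
  rw [le_isGLB_iff hE.isGLB, mem_lowerBounds, ← hA.spectrum_real_eq_range_eigenvalues,
    ← algebraMap_le_iff_le_spectrum (a := A) (ha := hA), Matrix.le_iff,
    ← isPositive_toEuclideanLin_iff, LinearMap.IsPositive, and_iff_right hsymm]
  simp only [hform, sub_nonneg]

end Eigenvalues

section GroundState

open scoped InnerProductSpace RealInnerProductSpace

variable {S : Type*} {π : S → ℝ}

/-- The map `f ↦ f √π`, which identifies `L²(π)` with the Euclidean space on which the discriminant
matrix acts. The vector `|√π⟩` is the image of the constant function `1`. -/
def l2Embed (π : S → ℝ) : (S → ℝ) →ₗ[ℝ] EuclideanSpace ℝ S :=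
  (WithLp.linearEquiv 2 ℝ (S → ℝ)).symm ∘ₗ LinearMap.mulLeft ℝ (sqrtVec π)

/-- The diagonal `b g_η(H / |E*|)` of the perturbation `b G_η`, as a function of the state. -/
def shortPathPotential (b η : ℝ) (H : S → ℝ) (Estar : ℝ) : S → ℝ :=
  fun x => b * gEta η (H x / |Estar|)

theorem l2Embed_apply (f : S → ℝ) (x : S) : l2Embed π f x = √(π x) * f x := rfl

theorem ofLp_l2Embed (f : S → ℝ) : (l2Embed π f).ofLp = sqrtVec π * f := rfl

variable [Fintype S]

theorem inner_l2Embed (hπ : ∀ x, 0 ≤ π x) (f g : S → ℝ) :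
    ⟪l2Embed π f, l2Embed π g⟫ = ∑ x, π x * (f x * g x) := by
  refine sum_congr rfl fun x _ => ?_
  calc ⟪l2Embed π f x, l2Embed π g x⟫ = √(π x) * √(π x) * (f x * g x) := by
        simp only [l2Embed_apply, RCLike.inner_apply, conj_trivial]
        ring
    _ = π x * (f x * g x) := by rw [Real.mul_self_sqrt (hπ x)]

theorem norm_l2Embed_one (hπ : ∀ x, 0 ≤ π x) (hsum : ∑ x, π x = 1) : ‖l2Embed π 1‖ = 1 := by
  have hsq : ‖l2Embed π 1‖ ^ 2 = 1 := by
    rw [← real_inner_self_eq_norm_sq, inner_l2Embed hπ]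
    simpa using hsum
  exact (pow_eq_one_iff_of_nonneg (norm_nonneg _) two_ne_zero).1 hsq

theorem inner_l2Embed_one_nonpos (hπ : ∀ x, 0 ≤ π x) {f : S → ℝ} (hf : ∀ x, f x ≤ 0) :
    ⟪l2Embed π 1, l2Embed π f⟫ ≤ 0 := by
  rw [inner_l2Embed hπ]
  exact sum_nonpos fun x _ => by simpa using mul_nonpos_of_nonneg_of_nonpos (hπ x) (hf x)

theorem norm_l2Embed_sq_le_neg_inner_one (hπ : ∀ x, 0 ≤ π x) {f : S → ℝ}
    (hf : ∀ x, f x ∈ Set.Icc (-1) 0) :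
    ‖l2Embed π f‖ ^ 2 ≤ -⟪l2Embed π 1, l2Embed π f⟫ := by
  rw [← real_inner_self_eq_norm_sq, inner_l2Embed hπ, inner_l2Embed hπ, ← sum_neg_distrib]
  refine sum_le_sum fun x _ => ?_
  obtain ⟨hneg, hpos⟩ := hf x
  simp only [Pi.one_apply, one_mul, ← mul_neg]
  exact mul_le_mul_of_nonneg_left (by nlinarith) (hπ x)

theorem neg_massLE_le_inner_l2Embed_one (hπ : ∀ x, 0 ≤ π x) {f H : S → ℝ} {c : ℝ}
    (hf : ∀ x, -{y | H y ≤ c}.indicator 1 x ≤ f x) :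
    -massLE π H c ≤ ⟪l2Embed π 1, l2Embed π f⟫ := by
  rw [inner_l2Embed hπ, massLE, ← sum_neg_distrib]
  refine sum_le_sum fun x _ => ?_
  calc -{y | H y ≤ c}.indicator π x = π x * -{y | H y ≤ c}.indicator 1 x := by
        by_cases hx : H x ≤ c <;> simp [hx]
    _ ≤ π x * (1 * f x) := by rw [one_mul]; exact mul_le_mul_of_nonneg_left (hf x) (hπ x)

variable [DecidableEq S]

theorem toEuclideanLin_discMat_l2Embed (hπ : ∀ x, 0 < π x) (P : Matrix S S ℝ) (f : S → ℝ) :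
    toEuclideanLin (discMat P π) (l2Embed π f) = l2Embed π (P *ᵥ f) := by
  ext x
  simp only [toLpLin_apply, ofLp_l2Embed, l2Embed_apply, mulVec, dotProduct, discMat, of_apply,
    mul_sum, sqrtVec, Pi.mul_apply]
  refine sum_congr rfl fun y _ => ?_
  rw [Real.sqrt_div (hπ x).le]
  field_simp [(Real.sqrt_pos.2 (hπ y)).ne']

theorem toEuclideanLin_shortPathHam_l2Embed (hπ : ∀ x, 0 < π x) (P : Matrix S S ℝ) (b η : ℝ)
    (H : S → ℝ) (Estar : ℝ) (f : S → ℝ) :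
    toEuclideanLin (shortPathHam P π b η H Estar) (l2Embed π f) =
      l2Embed π (-(P *ᵥ f) + shortPathPotential b η H Estar * f) := by
  have hdiag : toEuclideanLin (b • GEtaMat η H Estar) (l2Embed π f) =
      l2Embed π (shortPathPotential b η H Estar * f) := by
    ext x
    simp only [toLpLin_apply, ofLp_l2Embed, l2Embed_apply, GEtaMat, smul_mulVec, Pi.smul_apply,
      mulVec_diagonal, shortPathPotential, Pi.mul_apply, sqrtVec, smul_eq_mul]
    ring
  rw [shortPathHam, map_add, map_neg, LinearMap.add_apply, LinearMap.neg_apply,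
    toEuclideanLin_discMat_l2Embed hπ, hdiag, map_add, map_neg]

theorem toEuclideanLin_shortPathHam_l2Embed_one {P : Matrix S S ℝ} (hπ : ∀ x, 0 < π x)
    (hP : ∀ x, ∑ y, P x y = 1) (b η : ℝ) (H : S → ℝ) (Estar : ℝ) :
    toEuclideanLin (shortPathHam P π b η H Estar) (l2Embed π 1) =
      (-1 : ℝ) • l2Embed π 1 + l2Embed π (shortPathPotential b η H Estar) := by
  have hP1 : P *ᵥ 1 = 1 := funext fun x => (dotProduct_one _).trans (hP x)
  rw [toEuclideanLin_shortPathHam_l2Embed hπ, hP1, mul_one, map_add, map_neg, neg_one_smul]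

theorem projPerp_mulVec_of_dotProduct_eq_zero {v : S → ℝ} (hv : sqrtVec π ⬝ᵥ v = 0) :
    projPerp π *ᵥ v = v := by
  simp [projPerp, sub_mulVec, vecMulVec_mulVec, hv]

theorem vecMul_projPerp_of_dotProduct_eq_zero {v : S → ℝ} (hv : sqrtVec π ⬝ᵥ v = 0) :
    v ᵥ* projPerp π = v := by
  simp [projPerp, vecMul_sub, vecMul_vecMulVec, dotProduct_comm v, hv]

theorem ShortPathCond.le_inner_of_orthogonal {P : Matrix S S ℝ} {b η Estar θ : ℝ} {H : S → ℝ}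
    (hSP : ShortPathCond P π b η H Estar θ) {w : EuclideanSpace ℝ S}
    (hw : ⟪l2Embed π 1, w⟫ = 0) :
    (-1 + θ) * ‖w‖ ^ 2 ≤ ⟪w, toEuclideanLin (shortPathHam P π b η H Estar) w⟫ := by
  have hperp : sqrtVec π ⬝ᵥ w.ofLp = 0 := by
    rw [← hw, EuclideanSpace.inner_eq_star_dotProduct, ofLp_l2Embed]
    simp [dotProduct_comm]
  have hform : w.ofLp ⬝ᵥ (projPerp π * shortPathHam P π b η H Estar * projPerp π) *ᵥ w.ofLp =
      ⟪w, toEuclideanLin (shortPathHam P π b η H Estar) w⟫ := by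
    rw [← mulVec_mulVec, projPerp_mulVec_of_dotProduct_eq_zero hperp, ← mulVec_mulVec,
      dotProduct_mulVec, vecMul_projPerp_of_dotProduct_eq_zero hperp,
      EuclideanSpace.inner_eq_star_dotProduct, star_trivial, dotProduct_comm, toLpLin_apply]
  calc (-1 + θ) * ‖w‖ ^ 2 = (-1 + θ) * ∑ x, w x * w x := by
        simp only [EuclideanSpace.real_norm_sq_eq, ← sq]
    _ ≤ w.ofLp ⬝ᵥ (projPerp π * shortPathHam P π b η H Estar * projPerp π) *ᵥ w.ofLp :=
        hSP w.ofLp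
    _ = ⟪w, toEuclideanLin (shortPathHam P π b η H Estar) w⟫ := hform

end GroundState

section Potential

theorem gEta_nonpos (η x : ℝ) : gEta η x ≤ 0 := min_le_left _ _

theorem gEta_eq_zero {η x : ℝ} (hη : 0 ≤ η) (hx : η - 1 ≤ x) : gEta η x = 0 :=
  min_eq_left (div_nonneg (by linarith) hη)

theorem neg_one_le_gEta {η x : ℝ} (hη : 0 < η) (hx : -1 ≤ x) : -1 ≤ gEta η x :=
  le_min (by norm_num) ((le_div_iff₀ hη).2 (by linarith))

variable {S : Type*} {b η Estar : ℝ} {H : S → ℝ}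

theorem shortPathPotential_nonpos (hb : 0 ≤ b) (x : S) :
    shortPathPotential b η H Estar x ≤ 0 :=
  mul_nonpos_of_nonneg_of_nonpos hb (gEta_nonpos _ _)

theorem neg_indicator_le_shortPathPotential (hb : b ∈ Set.Icc 0 1) (hη : 0 < η)
    (hEstar : Estar < 0) (hmin : ∀ x, Estar ≤ H x) (x : S) :
    -{y | H y ≤ (1 - η) * Estar}.indicator 1 x ≤ shortPathPotential b η H Estar x := by
  have hneg : 0 < -Estar := neg_pos.2 hEstar
  rw [shortPathPotential, abs_of_neg hEstar]
  by_cases hx : H x ≤ (1 - η) * Estar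
  · have hg : -1 ≤ gEta η (H x / -Estar) :=
      neg_one_le_gEta hη ((le_div_iff₀ hneg).2 (by linarith [hmin x]))
    simp only [Set.indicator_apply, Set.mem_ofPred_eq, hx, if_true, Pi.one_apply]
    nlinarith [hb.1, hb.2, gEta_nonpos η (H x / -Estar)]
  · have hg : gEta η (H x / -Estar) = 0 :=
      gEta_eq_zero hη.le ((le_div_iff₀ hneg).2 (by linarith))
    simp [hx, hg]

theorem shortPathPotential_mem_Icc (hb : b ∈ Set.Icc 0 1) (hη : 0 < η)
    (hEstar : Estar < 0) (hmin : ∀ x, Estar ≤ H x) (x : S) :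
    shortPathPotential b η H Estar x ∈ Set.Icc (-1) 0 :=
  ⟨(neg_le_neg (Set.indicator_le_self' (fun _ _ => zero_le_one) x)).trans
    (neg_indicator_le_shortPathPotential hb hη hEstar hmin x), shortPathPotential_nonpos hb.1 x⟩

end Potential

section EnergyShift

open scoped RealInnerProductSpace

variable {S : Type*} [Fintype S] {P : Matrix S S ℝ} {π H : S → ℝ} {b η θ Estar Eb : ℝ}

theorem massLE_pos (hπ : ∀ x, 0 < π x) {c : ℝ} (hc : ∃ x, H x ≤ c) : 0 < massLE π H c := by
  obtain ⟨x, hx⟩ := hc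
  refine sum_pos' (fun y _ => Set.indicator_nonneg (fun z _ => (hπ z).le) y) ⟨x, mem_univ x, ?_⟩
  simpa [hx] using hπ x

variable [DecidableEq S]

theorem isLeast_eigenvalues_shortPathHam_le_neg_one (hπ : ∀ x, 0 < π x) (hsum : ∑ x, π x = 1)
    (hP : ∀ x, ∑ y, P x y = 1) (hb : 0 ≤ b) (hHerm : (shortPathHam P π b η H Estar).IsHermitian)
    (hEb : IsLeast (Set.range hHerm.eigenvalues) Eb) : Eb ≤ -1 := by
  have hπ' (x : S) : 0 ≤ π x := (hπ x).le
  have hnorm : ‖l2Embed π 1‖ = 1 := norm_l2Embed_one hπ' hsum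
  have hrayleigh := (le_iff_of_isLeast_eigenvalues hHerm hEb).1 le_rfl (l2Embed π 1)
  rw [toEuclideanLin_shortPathHam_l2Embed_one hπ hP, inner_add_right, inner_smul_right,
    real_inner_self_eq_norm_sq, hnorm, RCLike.re_to_real] at hrayleigh
  linarith [inner_l2Embed_one_nonpos hπ'
    (shortPathPotential_nonpos (η := η) (H := H) (Estar := Estar) hb)]

theorem neg_one_sub_massLE_le_isLeast_eigenvalues_shortPathHam (hπ : ∀ x, 0 < π x)
    (hsum : ∑ x, π x = 1) (hP : ∀ x, ∑ y, P x y = 1) (hmin : ∀ x, Estar ≤ H x)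
    (hEstar : Estar < 0) (hη : 0 < η) (hb : b ∈ Set.Icc 0 1) (hθ : 0 < θ)
    (hSP : ShortPathCond P π b η H Estar θ) (hHerm : (shortPathHam P π b η H Estar).IsHermitian)
    (hEb : IsLeast (Set.range hHerm.eigenvalues) Eb) :
    -1 - (1 + 1 / θ) * massLE π H ((1 - η) * Estar) ≤ Eb := by
  have hπ' (x : S) : 0 ≤ π x := (hπ x).le
  set φ := shortPathPotential b η H Estar
  set m := massLE π H ((1 - η) * Estar)
  have hshift_nonpos : ⟪l2Embed π 1, l2Embed π φ⟫ ≤ 0 :=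
    inner_l2Embed_one_nonpos hπ' (shortPathPotential_nonpos hb.1)
  have hshift : -m ≤ ⟪l2Embed π 1, l2Embed π φ⟫ :=
    neg_massLE_le_inner_l2Embed_one hπ'
      (neg_indicator_le_shortPathPotential hb hη hEstar hmin)
  have hnorm_sq : ‖l2Embed π φ‖ ^ 2 ≤ -⟪l2Embed π 1, l2Embed π φ⟫ :=
    norm_l2Embed_sq_le_neg_inner_one hπ' (shortPathPotential_mem_Icc hb hη hEstar hmin)
  have hgap : -1 + ⟪l2Embed π 1, l2Embed π φ⟫ - ‖l2Embed π φ‖ ^ 2 / θ ≤ Eb :=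
    (le_iff_of_isLeast_eigenvalues hHerm hEb).2 <|
      mul_norm_sq_le_re_inner_map_of_gap (isSymmetric_toEuclideanLin_iff.2 hHerm)
        (norm_l2Embed_one hπ' hsum) (toEuclideanLin_shortPathHam_l2Embed_one hπ hP b η H Estar)
        hshift_nonpos hθ fun _ => hSP.le_inner_of_orthogonal
  calc -1 - (1 + 1 / θ) * m = -1 + -m - m / θ := by ring
    _ ≤ -1 + ⟪l2Embed π 1, l2Embed π φ⟫ - ‖l2Embed π φ‖ ^ 2 / θ := by gcongr; linarith
    _ ≤ Eb := hgap

end EnergyShift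

theorem stmt_5_general {X : Type*} [Fintype X] [DecidableEq X]
    (P : Matrix X X ℝ) (π : X → ℝ) (hM : IsMarkov P π)
    (H : X → ℝ) (Estar : ℝ) (hmin : IsLeast (Set.range H) Estar) (hEstar : Estar < 0)
    (η ω b : ℝ) (hη : 0 < η) (hω : ω ∈ Set.Ioo (0 : ℝ) 2) (hb : b ∈ Set.Icc (0 : ℝ) 1)
    (hSP : ShortPathCond P π b η H Estar (ω / 2))
    (hHerm : (shortPathHam P π b η H Estar).IsHermitian)
    (Eb : ℝ) (hEb : IsLeast (Set.range hHerm.eigenvalues) Eb) :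
    -1 - 4 * massLE π H ((1 - η) * Estar) / ω < Eb ∧ Eb ≤ -1 ∧
      |Eb| < 1 + 4 * massLE π H ((1 - η) * Estar) / ω := by
  set m := massLE π H ((1 - η) * Estar)
  have hm : 0 < m := massLE_pos hM.pi_pos <| by
    obtain ⟨x, hx⟩ := hmin.1
    exact ⟨x, by nlinarith⟩
  have hupper : Eb ≤ -1 :=
    isLeast_eigenvalues_shortPathHam_le_neg_one hM.pi_pos hM.pi_sum hM.rowSum hb.1 hHerm hEb
  have hlower : -1 - (1 + 1 / (ω / 2)) * m ≤ Eb :=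
    neg_one_sub_massLE_le_isLeast_eigenvalues_shortPathHam hM.pi_pos hM.pi_sum hM.rowSum
      (fun x => hmin.2 ⟨x, rfl⟩) hEstar hη hb (half_pos hω.1) hSP hHerm hEb
  have hconst : (1 + 1 / (ω / 2)) * m < 4 * m / ω := by
    have hω_pos := hω.1
    rw [lt_div_iff₀ hω.1]
    field_simp
    linarith [hω.2]
  refine ⟨by linarith, hupper, ?_⟩
  rw [abs_of_neg (by linarith)]
  linarith

/-- ground-state energy shift bound. Under the `γ` spectral density
condition and the `ω/2` short-path condition at `b`, the smallest eigenvalue `E_b`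
of `H_b` satisfies `-1 - 4·π(E*)^γ/ω < E_b ≤ -1`, so `|E_b| < 1 + 4·π(E*)^γ/ω`. -/
theorem stmt_5 {X : Type*} [Fintype X] [DecidableEq X]
    (P : Matrix X X ℝ) (π : X → ℝ) (hM : IsMarkov P π) (hrev : IsReversible P π)
    (H : X → ℝ) (Estar : ℝ) (hmin : IsLeast (Set.range H) Estar) (hEstar : Estar < 0)
    (hpiStar : piStar π H Estar < 1)
    (η γ ω b : ℝ) (hη : η ∈ Set.Ioo (0:ℝ) 1) (hγ : γ ∈ Set.Ioc (0:ℝ) 1)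
    (hω : ω ∈ Set.Ioo (0:ℝ) 1) (hb : b ∈ Set.Icc (0:ℝ) 1)
    (hSD : massLE π H ((1 - η) * Estar) ≤ piStar π H Estar ^ γ)
    (hSP : ShortPathCond P π b η H Estar (ω / 2))
    (hHerm : (shortPathHam P π b η H Estar).IsHermitian)
    (Eb : ℝ) (hEb : IsLeast (Set.range hHerm.eigenvalues) Eb) :
    -1 - 4 * piStar π H Estar ^ γ / ω < Eb ∧ Eb ≤ -1 ∧
      |Eb| < 1 + 4 * piStar π H Estar ^ γ / ω := by
  have hq : 4 * massLE π H ((1 - η) * Estar) / ω ≤ 4 * piStar π H Estar ^ γ / ω :=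
    div_le_div_of_nonneg_right (by linarith) hω.1.le
  obtain ⟨hlower, hupper, habs⟩ := stmt_5_general P π hM H Estar hmin hEstar η ω b hη.1
    ⟨hω.1, hω.2.trans one_lt_two⟩ hb hSP hHerm Eb hEb
  exact ⟨by linarith, hupper, by linarith⟩
end
end

section
/- Let M = (X, P, π) be a reversible finite Markov chain with |X| = V, such that 1 is a simple eigenvalue of D(P) with eigenvector |√π⟩ and every other eigenvalue of D(P) has absolute value at most 1 − ω for some ω ∈ (0,1). Let H : X → ℝ have minimum E* < 0, fix η ∈ (0,1) and b > 0, let H_b = −D(P) + b·G_η, suppose the ω/2 short-path condition holds at b, and let ψ_b be a unit ground eigenvector of H_b with eigenvalue E_b (so E_b ≤ −1). Then there is a parity s ∈ {0,1} such that for every ℓ ∈ ℕ with ℓ ≡ s (mod 2) and every z ∈ X: ⟨√π| (H_b/|E_b|)^ℓ |z⟩ − V·(1 − ω/2)^ℓ < ⟨√π|ψ_b⟩·⟨ψ_b|z⟩, where |z⟩ is the standard basis vector at z. -/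
open Matrix Finset

noncomputable section

variable {X : Type*} [Fintype X] [DecidableEq X]

/-! On the orthogonal complement of `ψ` the operator `H_b` has spectrum in `[-r, r]` with
`r = 1 - ω/2`. The lower bound is the min-max principle in codimension one: `H_b ≥ -r` on the
hyperplane `√π^⊥`, so `E_b < -r` is the only eigenvalue below `-r`. The upper bound holds because
`G_η ≤ 0` and `D(P) ≥ -r`. The powers of `H_b` therefore contract the component of `√π` orthogonal
to `ψ` at rate `r`, while they multiply the component along `ψ` by powers of `E_b`, whose
normalised sign `(-1)^ℓ` is `1` for even `ℓ`. The bound is strict because `√π` is not orthogonal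
to `ψ`: on `√π^⊥` the quadratic form of `H_b` stays above `-r > E_b`. -/

open scoped InnerProductSpace

section SymmetricOperator

variable {𝕜 E : Type*} [RCLike 𝕜] [NormedAddCommGroup E] [InnerProductSpace 𝕜 E]
  {T : E →L[𝕜] E} {φ ψ : E} {μ c r : ℝ}

theorem opNorm_le_of_abs_reApplyInnerSelf_le (hT : T.IsSymmetric) (hr : 0 ≤ r)
    (h : ∀ v, |T.reApplyInnerSelf v| ≤ r * ‖v‖ ^ 2) : ‖T‖ ≤ r := by
  rw [T.norm_eq_iSup_rayleighQuotient hT]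
  refine ciSup_le fun v ↦ ?_
  rw [abs_div, abs_sq]
  exact div_le_of_le_mul₀ (sq_nonneg _) hr (h v)

theorem norm_apply_le_of_abs_reApplyInnerSelf_le {W : Submodule 𝕜 E} (hT : T.IsSymmetric)
    (hW : ∀ w ∈ W, T w ∈ W) (hr : 0 ≤ r)
    (h : ∀ w ∈ W, |T.reApplyInnerSelf w| ≤ r * ‖w‖ ^ 2) {w : E} (hw : w ∈ W) :
    ‖T w‖ ≤ r * ‖w‖ :=
  (T.restrict hW).le_of_opNorm_le
    (opNorm_le_of_abs_reApplyInnerSelf_le (hT.restrict_invariant hW) hr fun v ↦ h v v.2) ⟨w, hw⟩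

theorem norm_pow_apply_le_of_forall_mem {W : Submodule 𝕜 E} (hW : ∀ w ∈ W, T w ∈ W) (hr : 0 ≤ r)
    (h : ∀ w ∈ W, ‖T w‖ ≤ r * ‖w‖) (n : ℕ) {w : E} (hw : w ∈ W) :
    ‖(T ^ n) w‖ ≤ r ^ n * ‖w‖ := by
  induction n generalizing w with
  | zero => simp
  | succ n ih =>
    calc ‖(T ^ (n + 1)) w‖ = ‖(T ^ n) (T w)‖ := by rw [pow_succ, mul_apply_eq_comp]
      _ ≤ r ^ n * (r * ‖w‖) := (ih (hW w hw)).trans (by gcongr; exact h w hw)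
      _ = r ^ (n + 1) * ‖w‖ := by ring

theorem pow_apply_of_eigenvector {a : 𝕜} (hψ : T ψ = a • ψ) (n : ℕ) : (T ^ n) ψ = a ^ n • ψ := by
  induction n with
  | zero => simp
  | succ n ih => rw [pow_succ, mul_apply_eq_comp, hψ, map_smul, ih, smul_smul, pow_succ']

theorem inner_eigenvector_apply_eq_zero (hT : T.IsSymmetric) {a : 𝕜} (hψ : T ψ = a • ψ) {w : E}
    (hw : ⟪ψ, w⟫_𝕜 = 0) : ⟪ψ, T w⟫_𝕜 = 0 := by
  rw [← hT.apply_clm, hψ, inner_smul_left, hw, mul_zero]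

theorem reApplyInnerSelf_eigenvector (hψ : T ψ = (μ : 𝕜) • ψ) :
    T.reApplyInnerSelf ψ = μ * ‖ψ‖ ^ 2 := by
  rw [ContinuousLinearMap.reApplyInnerSelf_apply, hψ, inner_smul_left, RCLike.conj_ofReal,
    RCLike.re_ofReal_mul, inner_self_eq_norm_sq]

theorem reApplyInnerSelf_eigenvector_add (hT : T.IsSymmetric) (hψ : T ψ = (μ : 𝕜) • ψ) {w : E}
    (hw : ⟪ψ, w⟫_𝕜 = 0) :
    T.reApplyInnerSelf (ψ + w) = μ * ‖ψ‖ ^ 2 + T.reApplyInnerSelf w := by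
  have hTw : ⟪T w, ψ⟫_𝕜 = 0 := inner_eq_zero_symm.1 (inner_eigenvector_apply_eq_zero hT hψ hw)
  have hψw : ⟪T ψ, w⟫_𝕜 = 0 := by rw [hψ, inner_smul_left, hw, mul_zero]
  rw [← reApplyInnerSelf_eigenvector hψ]
  simp only [ContinuousLinearMap.reApplyInnerSelf_apply, map_add, inner_add_left, inner_add_right,
    hTw, hψw, add_zero, zero_add]

theorem norm_sq_add_of_inner_eq_zero {v w : E} (h : ⟪v, w⟫_𝕜 = 0) :
    ‖v + w‖ ^ 2 = ‖v‖ ^ 2 + ‖w‖ ^ 2 := by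
  simpa only [sq] using norm_add_sq_eq_norm_sq_add_norm_sq_of_inner_eq_zero v w h

theorem le_reApplyInnerSelf_of_le_eigenvalue (hT : T.IsSymmetric) (hφ : T φ = (μ : 𝕜) • φ)
    (hcμ : c ≤ μ) (hlow : ∀ w, ⟪φ, w⟫_𝕜 = 0 → c * ‖w‖ ^ 2 ≤ T.reApplyInnerSelf w) (v : E) :
    c * ‖v‖ ^ 2 ≤ T.reApplyInnerSelf v := by
  obtain ⟨y, hy, w, hw, rfl⟩ := (𝕜 ∙ φ).exists_add_mem_mem_orthogonal v
  have hyw : ⟪y, w⟫_𝕜 = 0 := hw y hy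
  obtain ⟨t, rfl⟩ := Submodule.mem_span_singleton.1 hy
  have hφw : ⟪φ, w⟫_𝕜 = 0 := Submodule.mem_orthogonal_singleton_iff_inner_right.1 hw
  have htφ : T (t • φ) = (μ : 𝕜) • t • φ := by rw [map_smul, hφ, smul_comm]
  calc c * ‖t • φ + w‖ ^ 2 = c * ‖t • φ‖ ^ 2 + c * ‖w‖ ^ 2 := by
        rw [norm_sq_add_of_inner_eq_zero hyw, mul_add]
    _ ≤ μ * ‖t • φ‖ ^ 2 + T.reApplyInnerSelf w := by gcongr; exact hlow w hφw
    _ = T.reApplyInnerSelf (t • φ + w) := (reApplyInnerSelf_eigenvector_add hT htφ hyw).symm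

theorem inner_ne_zero_of_eigenvalue_lt (hψ0 : ψ ≠ 0) (hψ : T ψ = (μ : 𝕜) • ψ) (hμc : μ < c)
    (hlow : ∀ w, ⟪φ, w⟫_𝕜 = 0 → c * ‖w‖ ^ 2 ≤ T.reApplyInnerSelf w) : ⟪φ, ψ⟫_𝕜 ≠ 0 := by
  intro h
  have hlt : μ * ‖ψ‖ ^ 2 < c * ‖ψ‖ ^ 2 := by gcongr
  exact (hlow ψ h).not_gt (reApplyInnerSelf_eigenvector hψ ▸ hlt)

/- Any `w ⟂ ψ` can be moved into `φ^⊥` by adding a multiple of `ψ`, which only lowers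
`⟪T v, v⟫ - c‖v‖²`. -/
theorem le_reApplyInnerSelf_of_eigenvalue_lt (hT : T.IsSymmetric) (hψ0 : ψ ≠ 0)
    (hψ : T ψ = (μ : 𝕜) • ψ) (hμc : μ < c)
    (hlow : ∀ w, ⟪φ, w⟫_𝕜 = 0 → c * ‖w‖ ^ 2 ≤ T.reApplyInnerSelf w) {w : E}
    (hw : ⟪ψ, w⟫_𝕜 = 0) : c * ‖w‖ ^ 2 ≤ T.reApplyInnerSelf w := by
  have hφψ : ⟪φ, ψ⟫_𝕜 ≠ 0 := inner_ne_zero_of_eigenvalue_lt hψ0 hψ hμc hlow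
  obtain ⟨t, ht⟩ : ∃ t : 𝕜, ⟪φ, t • ψ + w⟫_𝕜 = 0 :=
    ⟨-⟪φ, w⟫_𝕜 / ⟪φ, ψ⟫_𝕜, by simp [inner_add_right, inner_smul_right, hφψ]⟩
  have htψ : T (t • ψ) = (μ : 𝕜) • t • ψ := by rw [map_smul, hψ, smul_comm]
  have htw : ⟪t • ψ, w⟫_𝕜 = 0 := by rw [inner_smul_left, hw, mul_zero]
  have hmoved := hlow _ ht
  rw [reApplyInnerSelf_eigenvector_add hT htψ htw, norm_sq_add_of_inner_eq_zero htw] at hmoved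
  have hmul : μ * ‖t • ψ‖ ^ 2 ≤ c * ‖t • ψ‖ ^ 2 := by gcongr
  linarith

theorem norm_pow_apply_le_of_inner_eigenvector_eq_zero (hT : T.IsSymmetric) {a : 𝕜}
    (hψ : T ψ = a • ψ) (hr : 0 ≤ r)
    (h : ∀ w, ⟪ψ, w⟫_𝕜 = 0 → |T.reApplyInnerSelf w| ≤ r * ‖w‖ ^ 2) (n : ℕ) {w : E}
    (hw : ⟪ψ, w⟫_𝕜 = 0) : ‖(T ^ n) w‖ ≤ r ^ n * ‖w‖ := by
  have hinv : ∀ w ∈ (𝕜 ∙ ψ)ᗮ, T w ∈ (𝕜 ∙ ψ)ᗮ := by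
    simpa only [Submodule.mem_orthogonal_singleton_iff_inner_right] using
      fun w ↦ inner_eigenvector_apply_eq_zero hT hψ
  have hstep : ∀ w ∈ (𝕜 ∙ ψ)ᗮ, ‖T w‖ ≤ r * ‖w‖ := fun w ↦
    norm_apply_le_of_abs_reApplyInnerSelf_le hT hinv hr fun v hv ↦
      h v (Submodule.mem_orthogonal_singleton_iff_inner_right.1 hv)
  exact norm_pow_apply_le_of_forall_mem hinv hr hstep n
    (Submodule.mem_orthogonal_singleton_iff_inner_right.2 hw)

theorem inner_sub_inner_smul_eq_zero (hψ1 : ‖ψ‖ = 1) (φ : E) :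
    ⟪ψ, φ - ⟪ψ, φ⟫_𝕜 • ψ⟫_𝕜 = 0 := by
  rw [inner_sub_right, inner_smul_right, inner_self_eq_norm_sq_to_K, hψ1, RCLike.ofReal_one,
    one_pow, mul_one, sub_self]

theorem norm_sub_inner_smul_lt (hψ1 : ‖ψ‖ = 1) (h : ⟪ψ, φ⟫_𝕜 ≠ 0) :
    ‖φ - ⟪ψ, φ⟫_𝕜 • ψ‖ < ‖φ‖ := by
  have horth : ⟪⟪ψ, φ⟫_𝕜 • ψ, φ - ⟪ψ, φ⟫_𝕜 • ψ⟫_𝕜 = 0 := by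
    rw [inner_smul_left, inner_sub_inner_smul_eq_zero hψ1, mul_zero]
  have hpyth := norm_sq_add_of_inner_eq_zero horth
  rw [add_sub_cancel, norm_smul, hψ1, mul_one] at hpyth
  have hpos : 0 < ‖⟪ψ, φ⟫_𝕜‖ ^ 2 := by positivity
  exact lt_of_pow_lt_pow_left₀ 2 (norm_nonneg _) (by linarith)

theorem norm_pow_apply_sub_lt (hT : T.IsSymmetric) (hr : 0 < r) (hμr : μ < -r) (hψ1 : ‖ψ‖ = 1)
    (hψ : T ψ = (μ : 𝕜) • ψ)
    (hlow : ∀ w, ⟪φ, w⟫_𝕜 = 0 → -r * ‖w‖ ^ 2 ≤ T.reApplyInnerSelf w)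
    (hup : ∀ w, ⟪ψ, w⟫_𝕜 = 0 → T.reApplyInnerSelf w ≤ r * ‖w‖ ^ 2) (n : ℕ) :
    ‖(T ^ n) φ - ((μ : 𝕜) ^ n * ⟪ψ, φ⟫_𝕜) • ψ‖ < r ^ n * ‖φ‖ := by
  have hψ0 : ψ ≠ 0 := norm_ne_zero_iff.1 (by simp [hψ1])
  have hψφ : ⟪ψ, φ⟫_𝕜 ≠ 0 := fun h ↦
    inner_ne_zero_of_eigenvalue_lt hψ0 hψ hμr hlow (inner_eq_zero_symm.1 h)
  have habs : ∀ w, ⟪ψ, w⟫_𝕜 = 0 → |T.reApplyInnerSelf w| ≤ r * ‖w‖ ^ 2 := fun w hw ↦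
    abs_le.2 ⟨neg_mul r _ ▸ le_reApplyInnerSelf_of_eigenvalue_lt hT hψ0 hψ hμr hlow hw, hup w hw⟩
  calc ‖(T ^ n) φ - ((μ : 𝕜) ^ n * ⟪ψ, φ⟫_𝕜) • ψ‖ = ‖(T ^ n) (φ - ⟪ψ, φ⟫_𝕜 • ψ)‖ := by
        rw [map_sub, map_smul, pow_apply_of_eigenvector hψ, smul_smul, mul_comm]
    _ ≤ r ^ n * ‖φ - ⟪ψ, φ⟫_𝕜 • ψ‖ :=
        norm_pow_apply_le_of_inner_eigenvector_eq_zero hT hψ hr.le habs n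
          (inner_sub_inner_smul_eq_zero hψ1 φ)
    _ < r ^ n * ‖φ‖ := by gcongr; exact norm_sub_inner_smul_lt hψ1 hψφ

end SymmetricOperator

section SymmetricMatrix

variable {n : Type*} [Fintype n] {M : Matrix n n ℝ} {φ ψ : n → ℝ} {μ c r : ℝ}

theorem inner_toLp_eq_dotProduct (u v : n → ℝ) :
    ⟪WithLp.toLp 2 u, WithLp.toLp 2 v⟫_ℝ = v ⬝ᵥ u := by
  rw [EuclideanSpace.inner_toLp_toLp, star_trivial]

theorem norm_toLp_sq (v : n → ℝ) : ‖WithLp.toLp 2 v‖ ^ 2 = v ⬝ᵥ v := by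
  rw [← real_inner_self_eq_norm_sq, inner_toLp_eq_dotProduct]

theorem reApplyInnerSelf_toEuclideanCLM [DecidableEq n] (M : Matrix n n ℝ) (v : n → ℝ) :
    (toEuclideanCLM (𝕜 := ℝ) M).reApplyInnerSelf (WithLp.toLp 2 v) = v ⬝ᵥ M *ᵥ v := by
  rw [ContinuousLinearMap.reApplyInnerSelf_apply, RCLike.re_to_real, real_inner_comm,
    inner_toEuclideanCLM]

theorem isSymmetric_toEuclideanCLM [DecidableEq n] (hM : M.IsHermitian) :
    (toEuclideanCLM (𝕜 := ℝ) M).IsSymmetric :=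
  isSymmetric_toEuclideanLin_iff.2 hM

theorem forall_le_reApplyInnerSelf_toEuclideanCLM [DecidableEq n]
    (h : ∀ v, v ⬝ᵥ φ = 0 → c * (v ⬝ᵥ v) ≤ v ⬝ᵥ M *ᵥ v) (w : EuclideanSpace ℝ n)
    (hw : ⟪WithLp.toLp 2 φ, w⟫_ℝ = 0) :
    c * ‖w‖ ^ 2 ≤ (toEuclideanCLM (𝕜 := ℝ) M).reApplyInnerSelf w := by
  obtain ⟨v, rfl⟩ := WithLp.toLp_surjective 2 w
  rw [norm_toLp_sq, reApplyInnerSelf_toEuclideanCLM]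
  exact h v (by rwa [inner_toLp_eq_dotProduct] at hw)

theorem le_dotProduct_mulVec_of_le_eigenvalue (hM : M.IsHermitian) (hφ : M *ᵥ φ = μ • φ)
    (hcμ : c ≤ μ) (hlow : ∀ v, v ⬝ᵥ φ = 0 → c * (v ⬝ᵥ v) ≤ v ⬝ᵥ M *ᵥ v) (v : n → ℝ) :
    c * (v ⬝ᵥ v) ≤ v ⬝ᵥ M *ᵥ v := by
  classical
  have hφ' : toEuclideanCLM (𝕜 := ℝ) M (WithLp.toLp 2 φ) = μ • WithLp.toLp 2 φ := by
    rw [toEuclideanCLM_toLp, hφ, WithLp.toLp_smul]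
  rw [← norm_toLp_sq, ← reApplyInnerSelf_toEuclideanCLM]
  exact le_reApplyInnerSelf_of_le_eigenvalue (isSymmetric_toEuclideanCLM hM) hφ' hcμ
    (forall_le_reApplyInnerSelf_toEuclideanCLM hlow) _

variable [DecidableEq n]

theorem abs_vecMul_pow_sub_lt (hM : M.IsHermitian) (hr : 0 < r) (hμr : μ < -r)
    (hφ1 : φ ⬝ᵥ φ = 1) (hψ1 : ψ ⬝ᵥ ψ = 1) (hψ : M *ᵥ ψ = μ • ψ)
    (hlow : ∀ v, v ⬝ᵥ φ = 0 → -r * (v ⬝ᵥ v) ≤ v ⬝ᵥ M *ᵥ v)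
    (hup : ∀ v, v ⬝ᵥ M *ᵥ v ≤ r * (v ⬝ᵥ v)) (k : ℕ) (i : n) :
    |(φ ᵥ* M ^ k) i - μ ^ k * (φ ⬝ᵥ ψ) * ψ i| < r ^ k := by
  have norm_eq_one {v : n → ℝ} (hv : v ⬝ᵥ v = 1) : ‖WithLp.toLp 2 v‖ = 1 := by
    rwa [← pow_eq_one_iff_of_nonneg (norm_nonneg _) two_ne_zero, norm_toLp_sq]
  have hψ' : toEuclideanCLM (𝕜 := ℝ) M (WithLp.toLp 2 ψ) = μ • WithLp.toLp 2 ψ := by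
    rw [toEuclideanCLM_toLp, hψ, WithLp.toLp_smul]
  have hup' (w : EuclideanSpace ℝ n) :
      (toEuclideanCLM (𝕜 := ℝ) M).reApplyInnerSelf w ≤ r * ‖w‖ ^ 2 := by
    obtain ⟨v, rfl⟩ := WithLp.toLp_surjective 2 w
    rw [norm_toLp_sq, reApplyInnerSelf_toEuclideanCLM]
    exact hup v
  have hbound := norm_pow_apply_sub_lt (isSymmetric_toEuclideanCLM hM) hr hμr (norm_eq_one hψ1) hψ'
    (forall_le_reApplyInnerSelf_toEuclideanCLM hlow) (fun w _ ↦ hup' w) k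
  rw [norm_eq_one hφ1, mul_one, ← map_pow, toEuclideanCLM_toLp, inner_toLp_eq_dotProduct] at hbound
  have hvecMul : φ ᵥ* M ^ k = M ^ k *ᵥ φ := by
    rw [← mulVec_transpose, ← conjTranspose_eq_transpose_of_trivial, (hM.pow k).eq]
  rw [hvecMul]
  exact (PiLp.norm_apply_le _ i).trans_lt hbound

theorem abs_vecMul_normalized_pow_sub_lt (hM : M.IsHermitian) (hr : 0 < r) (hμr : μ < -r)
    (hφ1 : φ ⬝ᵥ φ = 1) (hψ1 : ψ ⬝ᵥ ψ = 1) (hψ : M *ᵥ ψ = μ • ψ)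
    (hlow : ∀ v, v ⬝ᵥ φ = 0 → -r * (v ⬝ᵥ v) ≤ v ⬝ᵥ M *ᵥ v)
    (hup : ∀ v, v ⬝ᵥ M *ᵥ v ≤ r * (v ⬝ᵥ v)) (k : ℕ) (i : n) :
    |(φ ᵥ* (|μ|⁻¹ • M) ^ k) i - (-1) ^ k * (φ ⬝ᵥ ψ) * ψ i| < (r / |μ|) ^ k := by
  have hμ : μ < 0 := by linarith
  have hμ0 : μ ≠ 0 := hμ.ne
  have hpos : 0 < (|μ|⁻¹) ^ k := by positivity
  have hsign : (|μ|⁻¹) ^ k * μ ^ k = (-1) ^ k := by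
    rw [← mul_pow, abs_of_neg hμ, inv_neg, neg_mul, inv_mul_cancel₀ hμ0]
  have hscale : (φ ᵥ* (|μ|⁻¹ • M) ^ k) i - (-1) ^ k * (φ ⬝ᵥ ψ) * ψ i =
      (|μ|⁻¹) ^ k * ((φ ᵥ* M ^ k) i - μ ^ k * (φ ⬝ᵥ ψ) * ψ i) := by
    rw [smul_pow, vecMul_smul, Pi.smul_apply, smul_eq_mul, ← hsign]
    ring
  rw [hscale, abs_mul, abs_of_pos hpos, div_eq_inv_mul, mul_pow]
  exact mul_lt_mul_of_pos_left (abs_vecMul_pow_sub_lt hM hr hμr hφ1 hψ1 hψ hlow hup k i) hpos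

end SymmetricMatrix

section Markov

variable {X : Type*} {P : Matrix X X ℝ} {π : X → ℝ}

theorem isHermitian_discMat (hπ : ∀ x, 0 < π x) (hrev : IsReversible P π) :
    (discMat P π).IsHermitian := by
  refine IsHermitian.ext fun x y ↦ ?_
  have hx := Real.sqrt_pos.2 (hπ x)
  have hy := Real.sqrt_pos.2 (hπ y)
  simp only [discMat, of_apply, star_trivial, Real.sqrt_div (hπ _).le]
  field_simp
  rw [Real.sq_sqrt (hπ x).le, Real.sq_sqrt (hπ y).le]
  exact hrev y x

theorem posSemidef_neg_smul_GEtaMat [DecidableEq X] {b : ℝ} (hb : 0 ≤ b) (η : ℝ) (H : X → ℝ)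
    (Estar : ℝ) : (-(b • GEtaMat η H Estar)).PosSemidef := by
  rw [← smul_neg, GEtaMat, diagonal_neg]
  exact (PosSemidef.diagonal fun z ↦ neg_nonneg.2 (min_le_left _ _)).smul hb

theorem isHermitian_projPerp [DecidableEq X] (π : X → ℝ) : (projPerp π).IsHermitian :=
  isHermitian_one.sub (IsHermitian.ext fun _ _ ↦ mul_comm _ _)

variable [Fintype X]

theorem discMat_mulVec_sqrtVec (hM : IsMarkov P π) : discMat P π *ᵥ sqrtVec π = sqrtVec π := by
  ext x
  have hentry (y : X) : discMat P π x y * sqrtVec π y = sqrtVec π x * P x y := by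
    have hy := Real.sqrt_pos.2 (hM.pi_pos y)
    simp only [discMat, sqrtVec, of_apply, Real.sqrt_div (hM.pi_pos x).le]
    field_simp
  simp only [mulVec, dotProduct, hentry, ← Finset.mul_sum, hM.rowSum, mul_one]

theorem sqrtVec_dotProduct_self (hM : IsMarkov P π) : sqrtVec π ⬝ᵥ sqrtVec π = 1 := by
  simp only [dotProduct, sqrtVec, Real.mul_self_sqrt (hM.pi_pos _).le, hM.pi_sum]

variable [DecidableEq X]

theorem projPerp_mulVec {v : X → ℝ} (hv : v ⬝ᵥ sqrtVec π = 0) : projPerp π *ᵥ v = v := by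
  rw [projPerp, sub_mulVec, one_mulVec, vecMulVec_mulVec, dotProduct_comm, hv]
  simp

theorem ShortPathCond.le_dotProduct_mulVec {b η Estar θ : ℝ} {H : X → ℝ}
    (h : ShortPathCond P π b η H Estar θ) {v : X → ℝ} (hv : v ⬝ᵥ sqrtVec π = 0) :
    (-1 + θ) * (v ⬝ᵥ v) ≤ v ⬝ᵥ shortPathHam P π b η H Estar *ᵥ v := by
  have hvecMul : v ᵥ* projPerp π = v := by
    rw [← mulVec_transpose, ← conjTranspose_eq_transpose_of_trivial, (isHermitian_projPerp π).eq,
      projPerp_mulVec hv]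
  calc (-1 + θ) * (v ⬝ᵥ v)
      ≤ v ⬝ᵥ (projPerp π * shortPathHam P π b η H Estar * projPerp π) *ᵥ v := h v
    _ = v ⬝ᵥ shortPathHam P π b η H Estar *ᵥ v := by
      rw [← mulVec_mulVec, ← mulVec_mulVec, projPerp_mulVec hv, dotProduct_mulVec, hvecMul]

theorem IsMarkov.abs_sqrtVec_vecMul_pow_sub_lt (hM : IsMarkov P π) (hrev : IsReversible P π)
    {r : ℝ} (hr : 0 < r)
    (hD : ∀ v, v ⬝ᵥ sqrtVec π = 0 → -r * (v ⬝ᵥ v) ≤ v ⬝ᵥ discMat P π *ᵥ v)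
    {G : Matrix X X ℝ} (hG : (-G).PosSemidef)
    (hlow : ∀ v, v ⬝ᵥ sqrtVec π = 0 → -r * (v ⬝ᵥ v) ≤ v ⬝ᵥ (-discMat P π + G) *ᵥ v)
    {ψ : X → ℝ} {E : ℝ} (hψ : ψ ⬝ᵥ ψ = 1) (heig : (-discMat P π + G) *ᵥ ψ = E • ψ)
    (hE : E < -r) (ℓ : ℕ) (z : X) :
    |(sqrtVec π ᵥ* (|E|⁻¹ • (-discMat P π + G)) ^ ℓ) z -
      (-1) ^ ℓ * (sqrtVec π ⬝ᵥ ψ) * ψ z| < (r / |E|) ^ ℓ := by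
  have hDsymm := isHermitian_discMat hM.pi_pos hrev
  have hsymm : (-discMat P π + G).IsHermitian :=
    hDsymm.neg.add (by simpa only [neg_neg] using hG.isHermitian.neg)
  have hup (v : X → ℝ) : v ⬝ᵥ (-discMat P π + G) *ᵥ v ≤ r * (v ⬝ᵥ v) := by
    have hDv : -r * (v ⬝ᵥ v) ≤ v ⬝ᵥ discMat P π *ᵥ v :=
      le_dotProduct_mulVec_of_le_eigenvalue hDsymm
        ((discMat_mulVec_sqrtVec hM).trans (one_smul ℝ _).symm) (by linarith) hD v
    have hGv : 0 ≤ v ⬝ᵥ (-G) *ᵥ v := hG.dotProduct_mulVec_nonneg v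
    rw [neg_mulVec, dotProduct_neg] at hGv
    rw [add_mulVec, neg_mulVec, dotProduct_add, dotProduct_neg]
    linarith
  exact abs_vecMul_normalized_pow_sub_lt hsymm hr hE (sqrtVec_dotProduct_self hM) hψ heig hlow hup
    ℓ z

theorem stmt_9_general (hM : IsMarkov P π) (hrev : IsReversible P π) {ω : ℝ}
    (hω : ω ∈ Set.Ioo (0 : ℝ) 2)
    (hD : ∀ v, v ⬝ᵥ sqrtVec π = 0 → -(1 - ω / 2) * (v ⬝ᵥ v) ≤ v ⬝ᵥ discMat P π *ᵥ v)
    {G : Matrix X X ℝ} (hG : (-G).PosSemidef)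
    (hlow : ∀ v, v ⬝ᵥ sqrtVec π = 0 → (-1 + ω / 2) * (v ⬝ᵥ v) ≤ v ⬝ᵥ (-discMat P π + G) *ᵥ v)
    {ψ : X → ℝ} {E : ℝ} (hψ : ψ ⬝ᵥ ψ = 1) (heig : (-discMat P π + G) *ᵥ ψ = E • ψ)
    (hE : E ≤ -1) (ℓ : ℕ) (z : X) :
    |(sqrtVec π ᵥ* (|E|⁻¹ • (-discMat P π + G)) ^ ℓ) z -
      (-1) ^ ℓ * (sqrtVec π ⬝ᵥ ψ) * ψ z| < (1 - ω / 2) ^ ℓ := by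
  have hr : 0 < 1 - ω / 2 := by linarith [hω.2]
  have hEr : E < -(1 - ω / 2) := by linarith [hω.1]
  have hE1 : 1 ≤ |E| := le_abs.2 (Or.inr (by linarith))
  rw [neg_add_eq_sub, ← neg_sub] at hlow
  calc _ < ((1 - ω / 2) / |E|) ^ ℓ :=
        hM.abs_sqrtVec_vecMul_pow_sub_lt hrev hr hD hG hlow hψ heig hEr ℓ z
    _ ≤ (1 - ω / 2) ^ ℓ := by gcongr; exact div_le_self hr.le hE1

end Markov

/-- approximate ground-state projector bound. For a suitable parity `s`,
for all `ℓ ≡ s (mod 2)` and all `z`,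
`⟨√π|(H_b/|E_b|)^ℓ|z⟩ - V·(1 - ω/2)^ℓ < ⟨√π|ψ_b⟩·⟨ψ_b|z⟩`. -/
theorem stmt_9 {X : Type*} [Fintype X] [DecidableEq X]
    (P : Matrix X X ℝ) (π : X → ℝ) (hM : IsMarkov P π) (hrev : IsReversible P π)
    (ω : ℝ) (hω : ω ∈ Set.Ioo (0:ℝ) 1)
    (hDpi : (discMat P π).mulVec (sqrtVec π) = sqrtVec π)
    (habs : ∀ v : X → ℝ, (∑ x, v x * sqrtVec π x) = 0 →
      |∑ x, v x * (discMat P π).mulVec v x| ≤ (1 - ω) * ∑ x, v x * v x)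
    (H : X → ℝ) (Estar : ℝ) (hmin : IsLeast (Set.range H) Estar) (hEstar : Estar < 0)
    (η b : ℝ) (hη : η ∈ Set.Ioo (0:ℝ) 1) (hb : 0 < b)
    (hSP : ShortPathCond P π b η H Estar (ω / 2))
    (ψb : X → ℝ) (Eb : ℝ) (hψ : ∑ x, ψb x * ψb x = 1)
    (heig : (shortPathHam P π b η H Estar).mulVec ψb = Eb • ψb)
    (hground : ∀ v : X → ℝ, Eb * (∑ x, v x * v x) ≤
      ∑ x, v x * (shortPathHam P π b η H Estar).mulVec v x)
    (hEb : Eb ≤ -1) :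
    ∃ s : ℕ, s < 2 ∧ ∀ ℓ : ℕ, ℓ % 2 = s → ∀ z : X,
      (∑ x, sqrtVec π x * ((|Eb|⁻¹ • shortPathHam P π b η H Estar) ^ ℓ) x z)
          - (Fintype.card X : ℝ) * (1 - ω / 2) ^ ℓ
        < (∑ x, sqrtVec π x * ψb x) * ψb z := by
  have hD (v : X → ℝ) (hv : v ⬝ᵥ sqrtVec π = 0) :
      -(1 - ω / 2) * (v ⬝ᵥ v) ≤ v ⬝ᵥ discMat P π *ᵥ v := by
    have hvv : 0 ≤ v ⬝ᵥ v := dotProduct_star_self_nonneg v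
    have hgap : -((1 - ω) * (v ⬝ᵥ v)) ≤ v ⬝ᵥ discMat P π *ᵥ v := (abs_le.1 (habs v hv)).1
    nlinarith [hω.1]
  refine ⟨0, two_pos, fun ℓ hℓ z ↦ ?_⟩
  have hbound := (abs_lt.1 (stmt_9_general hM hrev ⟨hω.1, by linarith [hω.2]⟩ hD
    (posSemidef_neg_smul_GEtaMat hb.le η H Estar) (fun _ ↦ hSP.le_dotProduct_mulVec) hψ heig hEb
    ℓ z)).2
  rw [(Nat.even_iff.2 hℓ).neg_one_pow, one_mul] at hbound
  have hcard : (1 : ℝ) ≤ Fintype.card X := mod_cast Fintype.card_pos_iff.2 ⟨z⟩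
  have hpow : 0 ≤ (1 - ω / 2) ^ ℓ := pow_nonneg (by linarith [hω.2]) ℓ
  exact sub_lt_comm.1 (hbound.trans_le (le_mul_of_one_le_left hpow hcard))
end
end
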